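/- arXiv:1510.07583 — 5 statements merged into one kernel-verified Lean document; each statement's English description precedes it below -/
import Mathlib

section
/- Let G be a group such that G = KX, where K is a normal subgroup of G and X is a subgroup of G, and regard K as an X-group via conjugation. Then: (i) G is nilpotent if and only if X is nilpotent and X acts nilpotently on K, in which case the nilpotency class of G equals max{nil X, nil_X K}; (ii) G is solvable if and only if X and K are solvable, in which case the derived length of G equals max{der(X), der_X(K)}. -/
open scoped Pointwise

/-- The lower `G`-central series of a `G`-group `K` (action given by `φ : G →* MulAut K`):
`lowerGCentralSeries φ i = γ^G_{i+1} K`, with `γ^G_1 K = K` and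
`γ^G_{i+1} K = ⟨ k (g·l) k⁻¹ l⁻¹ : k ∈ K, l ∈ γ^G_i K, g ∈ G ⟩`. -/
def lowerGCentralSeries {G K : Type*} [Group G] [Group K] (φ : G →* MulAut K) :
    ℕ → Subgroup K
  | 0 => ⊤
  | (i + 1) => Subgroup.closure
      {x | ∃ (k l : K) (g : G), l ∈ lowerGCentralSeries φ i ∧ x = k * (φ g l) * k⁻¹ * l⁻¹}

/-- The `G`-derived series of a `G`-group `K`: `δ^G_0 K = K` and
`δ^G_{i+1} K = γ^{G^{(i)}}_2 (δ^G_i K)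
            = ⟨ k (g·l) k⁻¹ l⁻¹ : k, l ∈ δ^G_i K, g ∈ G^{(i)} ⟩`. -/
def gDerivedSeries {G K : Type*} [Group G] [Group K] (φ : G →* MulAut K) :
    ℕ → Subgroup K
  | 0 => ⊤
  | (i + 1) => Subgroup.closure
      {x | ∃ k l : K, k ∈ gDerivedSeries φ i ∧ l ∈ gDerivedSeries φ i ∧
        ∃ g ∈ derivedSeries G i, x = k * (φ g l) * k⁻¹ * l⁻¹}

/-- The action is nilpotent: some term of the lower `G`-central series is trivial. -/
def ActsNilpotently {G K : Type*} [Group G] [Group K] (φ : G →* MulAut K) : Prop :=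
  ∃ c, lowerGCentralSeries φ c = ⊥

/-- The nilpotency class `nil_G K` of a nilpotent action. -/
noncomputable def actionNilClass {G K : Type*} [Group G] [Group K] (φ : G →* MulAut K) : ℕ :=
  sInf {c | lowerGCentralSeries φ c = ⊥}

/-- The action is solvable: some term of the `G`-derived series is trivial. -/
def ActsSolvably {G K : Type*} [Group G] [Group K] (φ : G →* MulAut K) : Prop :=
  ∃ d, gDerivedSeries φ d = ⊥

/-- The derived length `der_G(K)` of a solvable action. -/
noncomputable def actionDerLength {G K : Type*} [Group G] [Group K] (φ : G →* MulAut K) : ℕ :=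
  sInf {d | gDerivedSeries φ d = ⊥}

/-- The nilpotency class of a group (length of the upper central series). -/
noncomputable def nilClass (G : Type*) [Group G] : ℕ :=
  sInf {n | upperCentralSeries G n = ⊤}

/-- The derived length of a group (length of the derived series). -/
noncomputable def derLength (G : Type*) [Group G] : ℕ :=
  sInf {n | derivedSeries G n = ⊥}

/-!
Write `L i` for the image in `G` of the `i`-th term of the lower `X`-central series of `K`. Since
`G = KX`, a twisted commutator `k (x • l) k⁻¹ l⁻¹` is the ordinary commutator `⁅k x, l⁆` in `G`, so
`L (i + 1) = ⁅G, L i⁆`. The point is that `γ_i G = L i · γ_i X` for all `i`: expanding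
`⁅K X, L i · γ_i X⁆`, every contribution except `⁅X, γ_i X⁆` lies in `L (i + 1)`, where
`⁅K, γ_i G⁆ ≤ L (i + 1)` is the three subgroups lemma. In the same way `G⁽ⁱ⁾ = D i · X⁽ⁱ⁾`, where
`D i` is the image of the `i`-th term of the `X`-derived series of `K`. Hence a term of the series
of `G` vanishes exactly when the corresponding terms for `X` and for the action on `K` both vanish.
-/

section UpperSets

theorem isUpperSet_setOf_eq_bot_of_antitone {α β : Type*} [Preorder α] [PartialOrder β]
    [OrderBot β] {f : α → β} (hf : Antitone f) : IsUpperSet {a | f a = ⊥} :=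
  fun _ _ hab ha => le_bot_iff.1 ((hf hab).trans_eq ha)

theorem nonempty_inter_iff_of_isUpperSet {α : Type*} [Preorder α] [IsDirectedOrder α]
    {s t : Set α} (hs : IsUpperSet s) (ht : IsUpperSet t) :
    (s ∩ t).Nonempty ↔ s.Nonempty ∧ t.Nonempty := by
  refine ⟨fun h => ⟨h.left, h.right⟩, fun ⟨⟨a, ha⟩, ⟨b, hb⟩⟩ => ?_⟩
  obtain ⟨c, hac, hbc⟩ := exists_ge_ge a b
  exact ⟨c, hs hac ha, ht hbc hb⟩

theorem csInf_inter_eq_max_of_isUpperSet {α : Type*} [ConditionallyCompleteLinearOrderBot α]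
    {s t : Set α} (hs : IsUpperSet s) (ht : IsUpperSet t) (hst : (s ∩ t).Nonempty) :
    sInf (s ∩ t) = max (sInf s) (sInf t) := by
  rcases hs.total ht with h | h
  · rw [Set.inter_eq_left.2 h, max_eq_left (csInf_le_csInf' hst.left h)]
  · rw [Set.inter_eq_right.2 h, max_eq_right (csInf_le_csInf' hst.right h)]

end UpperSets

section Commutators

open Subgroup
open scoped commutatorElement

variable {G : Type*} [Group G]

theorem sup_commutator_le {H₁ H₂ L M : Subgroup G} (hH₁ : H₁ ≤ normalizer M)
    (hH₂ : H₂ ≤ normalizer M) (h₁ : ⁅H₁, L⁆ ≤ M) (h₂ : ⁅H₂, L⁆ ≤ M) : ⁅H₁ ⊔ H₂, L⁆ ≤ M := by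
  have mul_mem_step {H : Subgroup G} (hH : H ≤ normalizer M) (h : ⁅H, L⁆ ≤ M) {x y l : G}
      (hx : x ∈ H) (hl : l ∈ L) (hy : ⁅y, l⁆ ∈ M) : ⁅x * y, l⁆ ∈ M := by
    rw [commutatorElement_mul_left_eq_conj_mul]
    exact mul_mem (le_normalizer_iff.1 hH x hx _ hy) (h (commutator_mem_commutator hx hl))
  rw [commutator_le, sup_eq_closure]
  intro g hg l hl
  induction hg using closure_induction_left with
  | one => simp
  | mul_left x hx y _ hy =>
    exact hx.elim (mul_mem_step hH₁ h₁ · hl hy) (mul_mem_step hH₂ h₂ · hl hy)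
  | inv_mul_cancel x hx y _ hy =>
    exact hx.elim (fun hx => mul_mem_step hH₁ h₁ (inv_mem hx) hl hy)
      (fun hx => mul_mem_step hH₂ h₂ (inv_mem hx) hl hy)

theorem commutator_sup_le {L H₁ H₂ M : Subgroup G} (hH₁ : H₁ ≤ normalizer M)
    (hH₂ : H₂ ≤ normalizer M) (h₁ : ⁅L, H₁⁆ ≤ M) (h₂ : ⁅L, H₂⁆ ≤ M) : ⁅L, H₁ ⊔ H₂⁆ ≤ M := by
  rw [commutator_comm] at *
  exact sup_commutator_le hH₁ hH₂ h₁ h₂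

theorem le_normalizer_sup_of_commutator_le {H M N : Subgroup G} [N.Normal] (h : ⁅H, M⁆ ≤ N) :
    H ≤ normalizer (N ⊔ M : Subgroup G) := by
  rw [le_normalizer_iff_commutator_le_right]
  exact (commutator_sup_le le_normalizer_of_normal le_normalizer_of_normal
    (commutator_le_right H N) h).trans le_sup_left

theorem sup_commutator_sup_le {A B C D N : Subgroup G} [N.Normal] (hAC : ⁅A, C⁆ ≤ N)
    (hAD : ⁅A, D⁆ ≤ N) (hBC : ⁅B, C⁆ ≤ N) (hB : ⁅B, D⁆ ≤ B) (hD : ⁅B, D⁆ ≤ D) :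
    ⁅A ⊔ B, C ⊔ D⁆ ≤ N ⊔ ⁅B, D⁆ := by
  have le_normalizer_sup {H : Subgroup G} (hH : H ≤ normalizer (⁅B, D⁆ : Subgroup G)) :
      H ≤ normalizer (N ⊔ ⁅B, D⁆ : Subgroup G) := by
    rw [sup_comm]
    exact hH.trans normalizer_le_normalizer_sup_normal
  have hA_norm : A ≤ normalizer (N ⊔ ⁅B, D⁆ : Subgroup G) :=
    le_normalizer_sup_of_commutator_le ((commutator_mono le_rfl hD).trans hAD)
  have hC_norm : C ≤ normalizer (N ⊔ ⁅B, D⁆ : Subgroup G) :=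
    le_normalizer_sup_of_commutator_le
      ((commutator_mono le_rfl hB).trans (commutator_comm_le C B |>.trans hBC))
  have hB_norm : B ≤ normalizer (N ⊔ ⁅B, D⁆ : Subgroup G) :=
    le_normalizer_sup (normalizer_commutator_ge_left B D)
  have hD_norm : D ≤ normalizer (N ⊔ ⁅B, D⁆ : Subgroup G) :=
    le_normalizer_sup (normalizer_commutator_ge_right B D)
  exact sup_commutator_le hA_norm hB_norm
    (commutator_sup_le hC_norm hD_norm (hAC.trans le_sup_left) (hAD.trans le_sup_left))
    (commutator_sup_le hC_norm hD_norm (hBC.trans le_sup_left) le_sup_right)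

theorem commutator_sup_self_eq (D Y : Subgroup G) [D.Normal] [(D ⊔ Y).Normal] :
    ⁅D ⊔ Y, D ⊔ Y⁆ = ⁅D ⊔ Y, D⁆ ⊔ ⁅Y, Y⁆ := by
  apply le_antisymm
  · apply sup_commutator_sup_le
    · exact commutator_mono le_sup_left le_rfl
    · exact commutator_comm_le D Y |>.trans (commutator_mono le_sup_right le_rfl)
    · exact commutator_mono le_sup_right le_rfl
    · exact Y.commutator_le_self
    · exact Y.commutator_le_self
  · exact sup_le (commutator_mono le_rfl le_sup_left) (commutator_mono le_sup_right le_sup_right)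

theorem commutator_commutator_le_of_rotate {A B C N : Subgroup G} [N.Normal]
    (h₁ : ⁅⁅B, C⁆, A⁆ ≤ N) (h₂ : ⁅⁅C, A⁆, B⁆ ≤ N) : ⁅⁅A, B⁆, C⁆ ≤ N := by
  have le_iff_map_eq_bot (H : Subgroup G) : H ≤ N ↔ H.map (QuotientGroup.mk' N) = ⊥ := by
    rw [Subgroup.map_eq_bot_iff, QuotientGroup.ker_mk']
  simp only [le_iff_map_eq_bot, map_commutator] at *
  exact commutator_commutator_eq_bot_of_rotate h₁ h₂

theorem commutator_lowerCentralSeries_le {L : ℕ → Subgroup G} (hnormal : ∀ i, (L i).Normal)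
    (hL : ∀ i, ⁅L i, ⊤⁆ ≤ L (i + 1)) (i j : ℕ) :
    ⁅L j, (⊤ : Subgroup G).lowerCentralSeries i⁆ ≤ L (i + j + 1) := by
  induction i generalizing j with
  | zero => simpa using hL j
  | succ i ih =>
    rw [Subgroup.lowerCentralSeries_succ, commutator_comm]
    apply commutator_commutator_le_of_rotate
    · calc ⁅⁅⊤, L j⁆, (⊤ : Subgroup G).lowerCentralSeries i⁆
          ≤ ⁅L (j + 1), (⊤ : Subgroup G).lowerCentralSeries i⁆ :=
            commutator_mono (commutator_comm_le _ _ |>.trans (hL j)) le_rfl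
        _ ≤ L (i + (j + 1) + 1) := ih (j + 1)
        _ = L (i + 1 + j + 1) := by congr 1; omega
    · calc ⁅⁅L j, (⊤ : Subgroup G).lowerCentralSeries i⁆, ⊤⁆
          ≤ ⁅L (i + j + 1), ⊤⁆ := commutator_mono (ih j) le_rfl
        _ ≤ L (i + j + 1 + 1) := hL _
        _ = L (i + 1 + j + 1) := by congr 1; omega

end Commutators

section TwistedCommutators

variable {G K : Type*} [Group G] [Group K] (φ : G →* MulAut K)

/-- The subgroup generated by the twisted commutators `k (g • l) k⁻¹ l⁻¹` with `k ∈ P`, `g ∈ Y` and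
`l ∈ Q`. Every step of the lower `G`-central series and of the `G`-derived series has this form. -/
def twistedCommutator (P : Subgroup K) (Y : Subgroup G) (Q : Subgroup K) : Subgroup K :=
  Subgroup.closure {x | ∃ k ∈ P, ∃ g ∈ Y, ∃ l ∈ Q, k * φ g l * k⁻¹ * l⁻¹ = x}

variable {φ} in
theorem twistedCommutator_mono {P P' Q Q' : Subgroup K} {Y Y' : Subgroup G} (hP : P ≤ P')
    (hY : Y ≤ Y') (hQ : Q ≤ Q') : twistedCommutator φ P Y Q ≤ twistedCommutator φ P' Y' Q' :=
  Subgroup.closure_mono fun _ ⟨k, hk, g, hg, l, hl, hx⟩ => ⟨k, hP hk, g, hY hg, l, hQ hl, hx⟩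

theorem lowerGCentralSeries_succ (i : ℕ) :
    lowerGCentralSeries φ (i + 1) = twistedCommutator φ ⊤ ⊤ (lowerGCentralSeries φ i) := by
  rw [lowerGCentralSeries, twistedCommutator]
  congr 1
  ext x
  exact ⟨fun ⟨k, l, g, hl, hx⟩ => ⟨k, trivial, g, trivial, l, hl, hx.symm⟩,
    fun ⟨k, _, g, _, l, hl, hx⟩ => ⟨k, l, g, hl, hx.symm⟩⟩

theorem gDerivedSeries_succ (i : ℕ) :
    gDerivedSeries φ (i + 1) =
      twistedCommutator φ (gDerivedSeries φ i) (derivedSeries G i) (gDerivedSeries φ i) := by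
  rw [gDerivedSeries, twistedCommutator]
  congr 1
  ext x
  exact ⟨fun ⟨k, l, hk, hl, g, hg, hx⟩ => ⟨k, hk, g, hg, l, hl, hx.symm⟩,
    fun ⟨k, hk, g, hg, l, hl, hx⟩ => ⟨k, l, hk, hl, g, hg, hx.symm⟩⟩

theorem lowerGCentralSeries_antitone : Antitone (lowerGCentralSeries φ) := by
  refine antitone_nat_of_succ_le fun i => ?_
  induction i with
  | zero => exact le_top
  | succ i ih =>
    calc lowerGCentralSeries φ (i + 1 + 1)
        = twistedCommutator φ ⊤ ⊤ (lowerGCentralSeries φ (i + 1)) := lowerGCentralSeries_succ φ _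
      _ ≤ twistedCommutator φ ⊤ ⊤ (lowerGCentralSeries φ i) :=
        twistedCommutator_mono le_rfl le_rfl ih
      _ = lowerGCentralSeries φ (i + 1) := (lowerGCentralSeries_succ φ i).symm

theorem gDerivedSeries_antitone : Antitone (gDerivedSeries φ) := by
  refine antitone_nat_of_succ_le fun i => ?_
  induction i with
  | zero => exact le_top
  | succ i ih =>
    calc gDerivedSeries φ (i + 1 + 1)
        = twistedCommutator φ (gDerivedSeries φ (i + 1)) (derivedSeries G (i + 1))
            (gDerivedSeries φ (i + 1)) := gDerivedSeries_succ φ _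
      _ ≤ twistedCommutator φ (gDerivedSeries φ i) (derivedSeries G i) (gDerivedSeries φ i) :=
        twistedCommutator_mono ih (derivedSeries_antitone G i.le_succ) ih
      _ = gDerivedSeries φ (i + 1) := (gDerivedSeries_succ φ i).symm

end TwistedCommutators

section Conjugation

open Subgroup
open scoped commutatorElement

variable {G : Type*} [Group G] (K X : Subgroup G) [K.Normal]

/-- The conjugation action of a subgroup `X` on a normal subgroup `K`. It is reducible, so that it
is interchangeable with the composite that it abbreviates. -/
abbrev conjAction : X →* MulAut K := MulAut.conjNormal.comp X.subtype

/-- The lower `X`-central series of `K` for conjugation, viewed in the ambient group `G`. -/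
def conjLowerCentralSeries (i : ℕ) : Subgroup G :=
  (lowerGCentralSeries (conjAction K X) i).map K.subtype

/-- The `X`-derived series of `K` for conjugation, viewed in the ambient group `G`. -/
def conjDerivedSeries (i : ℕ) : Subgroup G :=
  (gDerivedSeries (conjAction K X) i).map K.subtype

variable {K X} in
theorem coe_twisted_commutator_conjAction (k l : K) (x : X) :
    ((k * conjAction K X x l * k⁻¹ * l⁻¹ : K) : G) = ⁅(k * x : G), (l : G)⁆ := by
  simp [commutatorElement_def, mul_assoc]

theorem map_twistedCommutator_conjAction (P Q : Subgroup K) (Y : Subgroup X)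
    [(P.map K.subtype).Normal] :
    (twistedCommutator (conjAction K X) P Y Q).map K.subtype =
      ⁅P.map K.subtype ⊔ Y.map X.subtype, Q.map K.subtype⁆ := by
  rw [twistedCommutator, MonoidHom.map_closure, Subgroup.commutator_def]
  congr 1
  ext g
  constructor
  · rintro ⟨_, ⟨k, hk, x, hx, l, hl, rfl⟩, rfl⟩
    exact ⟨k * x, mul_mem_sup (mem_map_of_mem _ hk) (mem_map_of_mem _ hx), l, mem_map_of_mem _ hl,
      (coe_twisted_commutator_conjAction k l x).symm⟩
  · rintro ⟨_, hkx, _, ⟨l, hl, rfl⟩, rfl⟩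
    obtain ⟨_, ⟨k, hk, rfl⟩, _, ⟨x, hx, rfl⟩, rfl⟩ := mem_sup_of_normal_left.1 hkx
    exact ⟨_, ⟨k, hk, x, hx, l, hl, rfl⟩, coe_twisted_commutator_conjAction k l x⟩

theorem conjLowerCentralSeries_zero : conjLowerCentralSeries K X 0 = K := by
  simp [conjLowerCentralSeries, lowerGCentralSeries, ← MonoidHom.range_eq_map]

theorem conjDerivedSeries_zero : conjDerivedSeries K X 0 = K := by
  simp [conjDerivedSeries, gDerivedSeries, ← MonoidHom.range_eq_map]

theorem conjLowerCentralSeries_succ (i : ℕ) :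
    conjLowerCentralSeries K X (i + 1) = ⁅K ⊔ X, conjLowerCentralSeries K X i⁆ := by
  have : ((⊤ : Subgroup K).map K.subtype).Normal := by
    rwa [← MonoidHom.range_eq_map, range_subtype]
  rw [conjLowerCentralSeries, lowerGCentralSeries_succ, map_twistedCommutator_conjAction,
    ← MonoidHom.range_eq_map, ← MonoidHom.range_eq_map, range_subtype, range_subtype,
    conjLowerCentralSeries]

theorem conjDerivedSeries_succ (i : ℕ) [hi : (conjDerivedSeries K X i).Normal] :
    conjDerivedSeries K X (i + 1) =
      ⁅conjDerivedSeries K X i ⊔ (derivedSeries X i).map X.subtype, conjDerivedSeries K X i⁆ := by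
  rw [conjDerivedSeries] at hi
  rw [conjDerivedSeries, gDerivedSeries_succ, map_twistedCommutator_conjAction, conjDerivedSeries]

end Conjugation

section Product

open Subgroup

variable {G : Type*} [Group G] {K X : Subgroup G} [hK : K.Normal]

theorem conjLowerCentralSeries_normal (hKX : K ⊔ X = ⊤) (i : ℕ) :
    (conjLowerCentralSeries K X i).Normal := by
  induction i with
  | zero => rwa [conjLowerCentralSeries_zero]
  | succ i ih =>
    rw [conjLowerCentralSeries_succ, hKX]
    infer_instance

theorem commutator_lowerCentralSeries_le_conjLowerCentralSeries (hKX : K ⊔ X = ⊤) (i : ℕ) :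
    ⁅K, (⊤ : Subgroup G).lowerCentralSeries i⁆ ≤ conjLowerCentralSeries K X (i + 1) := by
  have commutator_top_le (j : ℕ) :
      ⁅conjLowerCentralSeries K X j, ⊤⁆ ≤ conjLowerCentralSeries K X (j + 1) := by
    rw [conjLowerCentralSeries_succ, hKX, commutator_comm]
  simpa only [conjLowerCentralSeries_zero] using
    commutator_lowerCentralSeries_le (conjLowerCentralSeries_normal hKX) commutator_top_le i 0

theorem lowerCentralSeries_eq_sup (hKX : K ⊔ X = ⊤) (i : ℕ) :
    (⊤ : Subgroup G).lowerCentralSeries i =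
      conjLowerCentralSeries K X i ⊔ X.lowerCentralSeries i := by
  induction i with
  | zero => simp [conjLowerCentralSeries_zero, hKX]
  | succ i ih =>
    have := conjLowerCentralSeries_normal hKX (i + 1)
    have commutator_le_succ {H : Subgroup G} :
        ⁅H, conjLowerCentralSeries K X i⁆ ≤ conjLowerCentralSeries K X (i + 1) := by
      rw [conjLowerCentralSeries_succ, hKX]
      exact commutator_mono le_top le_rfl
    have commutator_X : ⁅X, X.lowerCentralSeries i⁆ = X.lowerCentralSeries (i + 1) := by
      rw [Subgroup.lowerCentralSeries_succ, commutator_comm]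
    apply le_antisymm
    · rw [Subgroup.lowerCentralSeries_succ, ih, commutator_comm, ← hKX, ← commutator_X]
      apply sup_commutator_sup_le commutator_le_succ _ commutator_le_succ
      · exact commutator_X ▸ X.lowerCentralSeries_le_self (i + 1)
      · exact commutator_X ▸ X.lowerCentralSeries_antitone i.le_succ
      · exact (commutator_mono le_rfl (lowerCentralSeries_mono i le_top)).trans
          (commutator_lowerCentralSeries_le_conjLowerCentralSeries hKX i)
    · apply sup_le
      · rw [conjLowerCentralSeries_succ, hKX, Subgroup.lowerCentralSeries_succ, commutator_comm]
        exact commutator_mono (ih ▸ le_sup_left) le_rfl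
      · exact lowerCentralSeries_mono (i + 1) le_top

-- Normality and the decomposition are proved together: `D (i + 1) = ⁅D i ⊔ X⁽ⁱ⁾, D i⁆` is normal
-- only because `D i ⊔ X⁽ⁱ⁾` is the normal subgroup `G⁽ⁱ⁾`.
theorem conjDerivedSeries_normal_and_derivedSeries_eq_sup (hKX : K ⊔ X = ⊤) (i : ℕ) :
    (conjDerivedSeries K X i).Normal ∧
      derivedSeries G i = conjDerivedSeries K X i ⊔ (derivedSeries X i).map X.subtype := by
  induction i with
  | zero => simp [conjDerivedSeries_zero, ← MonoidHom.range_eq_map, hKX, hK]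
  | succ i ih =>
    obtain ⟨_, ih⟩ := ih
    have : (conjDerivedSeries K X i ⊔ (derivedSeries X i).map X.subtype).Normal :=
      ih ▸ derivedSeries_normal G i
    rw [conjDerivedSeries_succ, derivedSeries_succ, derivedSeries_succ, map_commutator, ih]
    exact ⟨inferInstance, commutator_sup_self_eq _ _⟩

theorem setOf_lowerCentralSeries_eq_bot (hKX : K ⊔ X = ⊤) :
    {n | (⊤ : Subgroup G).lowerCentralSeries n = ⊥} =
      {n | (⊤ : Subgroup X).lowerCentralSeries n = ⊥} ∩
        {n | lowerGCentralSeries (conjAction K X) n = ⊥} := by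
  ext n
  rw [Set.mem_ofPred_eq, lowerCentralSeries_eq_sup hKX, sup_eq_bot_iff, conjLowerCentralSeries,
    ← top_subtype_lowerCentralSeries, map_eq_bot_iff_of_injective _ K.subtype_injective,
    map_eq_bot_iff_of_injective _ X.subtype_injective, and_comm]
  rfl

theorem setOf_derivedSeries_eq_bot (hKX : K ⊔ X = ⊤) :
    {n | derivedSeries G n = ⊥} =
      {n | derivedSeries X n = ⊥} ∩ {n | gDerivedSeries (conjAction K X) n = ⊥} := by
  ext n
  rw [Set.mem_ofPred_eq, (conjDerivedSeries_normal_and_derivedSeries_eq_sup hKX n).2,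
    sup_eq_bot_iff, conjDerivedSeries, map_eq_bot_iff_of_injective _ K.subtype_injective,
    map_eq_bot_iff_of_injective _ X.subtype_injective, and_comm]
  rfl

theorem isNilpotent_iff_of_sup_eq_top (hKX : K ⊔ X = ⊤) :
    Group.IsNilpotent G ↔ Group.IsNilpotent X ∧ ActsNilpotently (conjAction K X) := by
  rw [Subgroup.nilpotent_iff_lowerCentralSeries, Subgroup.nilpotent_iff_lowerCentralSeries]
  change Set.Nonempty {n | _} ↔ Set.Nonempty {n | _} ∧ Set.Nonempty {n | _}
  rw [setOf_lowerCentralSeries_eq_bot hKX]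
  exact nonempty_inter_iff_of_isUpperSet
    (isUpperSet_setOf_eq_bot_of_antitone (Subgroup.lowerCentralSeries_antitone _))
    (isUpperSet_setOf_eq_bot_of_antitone (lowerGCentralSeries_antitone _))

theorem nilClass_eq_sInf_lowerCentralSeries_eq_bot :
    nilClass G = sInf {n | (⊤ : Subgroup G).lowerCentralSeries n = ⊥} := by
  simp only [lowerCentralSeries_eq_bot_iff_upperCentralSeries_eq_top]
  rfl

theorem nilClass_eq_max (hKX : K ⊔ X = ⊤) (hG : Group.IsNilpotent G) :
    nilClass G = max (nilClass X) (actionNilClass (conjAction K X)) := by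
  have hne : {n | (⊤ : Subgroup G).lowerCentralSeries n = ⊥}.Nonempty :=
    Subgroup.nilpotent_iff_lowerCentralSeries.1 hG
  rw [nilClass_eq_sInf_lowerCentralSeries_eq_bot, nilClass_eq_sInf_lowerCentralSeries_eq_bot,
    actionNilClass]
  rw [setOf_lowerCentralSeries_eq_bot hKX] at hne ⊢
  exact csInf_inter_eq_max_of_isUpperSet
    (isUpperSet_setOf_eq_bot_of_antitone (Subgroup.lowerCentralSeries_antitone _))
    (isUpperSet_setOf_eq_bot_of_antitone (lowerGCentralSeries_antitone _)) hne

theorem mk'_comp_subtype_surjective (hKX : K ⊔ X = ⊤) :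
    Function.Surjective ((QuotientGroup.mk' K).comp X.subtype) := by
  apply MonoidHom.range_eq_top.1
  rw [MonoidHom.range_comp, range_subtype]
  apply comap_injective (QuotientGroup.mk'_surjective K)
  rw [QuotientGroup.comap_map_mk', hKX, comap_top]

theorem isSolvable_iff_of_sup_eq_top (hKX : K ⊔ X = ⊤) :
    Group.IsSolvable G ↔ Group.IsSolvable X ∧ Group.IsSolvable K := by
  refine ⟨fun _ => ⟨inferInstance, inferInstance⟩, fun ⟨_, hsolvK⟩ => ?_⟩
  exact (Group.isSolvable_iff_subgroup_quotient K).2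
    ⟨hsolvK, Group.isSolvable_of_surjective (mk'_comp_subtype_surjective hKX)⟩

theorem derLength_eq_max (hKX : K ⊔ X = ⊤) (hG : Group.IsSolvable G) :
    derLength G = max (derLength X) (actionDerLength (conjAction K X)) := by
  have hne : {n | derivedSeries G n = ⊥}.Nonempty := hG.solvable
  rw [derLength, derLength, actionDerLength]
  rw [setOf_derivedSeries_eq_bot hKX] at hne ⊢
  exact csInf_inter_eq_max_of_isUpperSet
    (isUpperSet_setOf_eq_bot_of_antitone (derivedSeries_antitone _))
    (isUpperSet_setOf_eq_bot_of_antitone (gDerivedSeries_antitone _)) hne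

end Product

/-- **Proposition 3.8.** Let `G = KX` with `K ⊴ G` and `X ≤ G`, and regard `K` as an
`X`-group via conjugation.  Then
(i) `G` is nilpotent iff `X` is nilpotent and `X` acts nilpotently on `K`, in which case
`nil G = max {nil X, nil_X K}`;
(ii) `G` is solvable iff `X` and `K` are solvable, in which case
`der G = max {der X, der_X K}`. -/
theorem nilpotency_and_solvability_of_product {G : Type*} [Group G]
    (K X : Subgroup G) [hK : K.Normal]
    (hKX : (K : Set G) * (X : Set G) = Set.univ) :
    (Group.IsNilpotent G ↔
      Group.IsNilpotent ↥X ∧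
        ActsNilpotently (MulAut.conjNormal.comp X.subtype : ↥X →* MulAut ↥K)) ∧
    (Group.IsNilpotent G →
      nilClass G = max (nilClass ↥X)
        (actionNilClass (MulAut.conjNormal.comp X.subtype : ↥X →* MulAut ↥K))) ∧
    (IsSolvable G ↔ IsSolvable ↥X ∧ IsSolvable ↥K) ∧
    (IsSolvable G →
      derLength G = max (derLength ↥X)
        (actionDerLength (MulAut.conjNormal.comp X.subtype : ↥X →* MulAut ↥K))) := by
  have hsup : K ⊔ X = ⊤ := by
    rw [← SetLike.coe_set_eq, Subgroup.normal_mul, hKX, Subgroup.coe_top]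
  exact ⟨isNilpotent_iff_of_sup_eq_top hsup, nilClass_eq_max hsup,
    isSolvable_iff_of_sup_eq_top hsup, derLength_eq_max hsup⟩
end

section
/- Let G be a group with a finite normal subgroup F, and let φ : R → G and ψ : R → G be group homomorphisms, where R is a radicable group. If φ(r)F = ψ(r)F for all r ∈ R, then φ = ψ. -/
/-- A group `R` is radicable if every element is an `m`-th power for each `m ≥ 1`. -/
def IsRadicable (R : Type*) [Group R] : Prop :=
  ∀ m : ℕ, 0 < m → ∀ g : R, ∃ x : R, x ^ m = g

/-!
The elements on which `φ` and `ψ` agree form a subgroup `E` of `R`, and two elements of `R` have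
the same discrepancy `(φ r)⁻¹ * ψ r` exactly when they lie in the same right coset of `E`. If only
finitely many discrepancies occur, `E` therefore has finite index; but a radicable group has no
proper subgroup of finite index, so `E = R`.
-/

section Radicable

variable {R G : Type*} [Group R] [Group G]

theorem IsRadicable.eq_top_of_finiteIndex (hR : IsRadicable R) (H : Subgroup R)
    [H.FiniteIndex] : H = ⊤ := by
  refine H.eq_top_iff'.mpr fun r => ?_
  have index_pos : 0 < H.normalCore.index := Nat.pos_of_ne_zero Subgroup.FiniteIndex.index_ne_zero
  obtain ⟨x, rfl⟩ := hR _ index_pos r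
  exact H.normalCore_le (H.normalCore.pow_index_mem x)

theorem inv_mul_eq_inv_mul_iff_mul_inv_mem_eqLocus (φ ψ : R →* G) (r s : R) :
    (φ r)⁻¹ * ψ r = (φ s)⁻¹ * ψ s ↔ r * s⁻¹ ∈ φ.eqLocus ψ := by
  change _ ↔ φ (r * s⁻¹) = ψ (r * s⁻¹)
  rw [map_mul, map_mul, map_inv, map_inv, inv_mul_eq_iff_eq_mul, ← mul_assoc,
    ← mul_inv_eq_iff_eq_mul, eq_comm]

theorem finiteIndex_eqLocus_of_finite_range_inv_mul {φ ψ : R →* G}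
    (h : (Set.range fun r => (φ r)⁻¹ * ψ r).Finite) : (φ.eqLocus ψ).FiniteIndex := by
  have : Finite (Set.range fun r => (φ r)⁻¹ * ψ r) := h
  -- The quotient consists of left cosets, hence the inverse of the representative.
  let discrepancy (q : R ⧸ φ.eqLocus ψ) : Set.range fun r => (φ r)⁻¹ * ψ r :=
    ⟨_, q.out⁻¹, rfl⟩
  have discrepancy_injective : Function.Injective discrepancy := fun p q hpq => by
    have hmem : p.out⁻¹ * q.out⁻¹⁻¹ ∈ φ.eqLocus ψ :=
      (inv_mul_eq_inv_mul_iff_mul_inv_mem_eqLocus φ ψ _ _).mp (congrArg Subtype.val hpq)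
    rw [inv_inv] at hmem
    rw [← p.out_eq', ← q.out_eq']
    exact QuotientGroup.eq.mpr hmem
  have : Finite (R ⧸ φ.eqLocus ψ) := Finite.of_injective discrepancy discrepancy_injective
  exact Subgroup.finiteIndex_of_finite_quotient

theorem eq_of_radicable_of_eq_mod_finite_general (hR : IsRadicable R) (φ ψ : R →* G)
    (h : (Set.range fun r => (φ r)⁻¹ * ψ r).Finite) : φ = ψ := by
  have := finiteIndex_eqLocus_of_finite_range_inv_mul h
  have eqLocus_eq_top : φ.eqLocus ψ = ⊤ := hR.eq_top_of_finiteIndex _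
  exact MonoidHom.eq_of_eqOn_top fun r _ => eqLocus_eq_top.ge (Subgroup.mem_top r)

end Radicable

/-- **Lemma 3.15.** Let `G` have a finite normal subgroup `F`, and let `φ, ψ : R → G` be
homomorphisms from a radicable group `R`.  If `φ(r)F = ψ(r)F` for all `r ∈ R`, then
`φ = ψ`. -/
theorem eq_of_radicable_of_eq_mod_finite {R G : Type*} [Group R] [Group G]
    (F : Subgroup G) (hFn : F.Normal) (hF : Finite ↥F)
    (hR : IsRadicable R) (φ ψ : R →* G)
    (h : ∀ r : R, (φ r)⁻¹ * ψ r ∈ F) : φ = ψ :=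
  eq_of_radicable_of_eq_mod_finite_general hR φ ψ <|
    (Set.toFinite (F : Set G)).subset (Set.range_subset_iff.mpr h)
end

section
/- Let G be a group and A a ℤG-module that is finite (as a set). Then there exist a ℤG-module A* and a surjective ℤG-module homomorphism φ : A* → A such that the underlying abelian group of A* is free abelian of finite rank (equivalently, torsion-free and polycyclic). -/
/-!
Let `S` be a finite `G`-stable subset generating `A`, for instance `A` itself when `A` is finite.
The permutation module `ℤ[S]` is free abelian of rank `|S|`, and evaluating formal sums of elements
of `S` in `A` is an equivariant map `ℤ[S] → A`, onto because `S` generates.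
-/

theorem linearCombination_coeff_ofMulAction {R G X M : Type*} [CommSemiring R] [Monoid G]
    [MulAction G X] [AddCommMonoid M] [Module R M] [DistribMulAction G M] [SMulCommClass G R M]
    (f : X →[G] M) (g : G) (v : MonoidAlgebra R X) :
    Finsupp.linearCombination R f (Representation.ofMulAction R G X g v).coeff =
      g • Finsupp.linearCombination R f v.coeff :=
  calc Finsupp.linearCombination R f (Representation.ofMulAction R G X g v).coeff
      = Finsupp.linearCombination R f (v.coeff.mapDomain (g • ·)) := by
        simp [Representation.ofMulAction_def]
    _ = Finsupp.linearCombination R (fun x => g • f x) v.coeff := by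
        simp only [Finsupp.linearCombination_mapDomain, Function.comp_def, map_smul]
    _ = g • Finsupp.linearCombination R f v.coeff :=
        (Finsupp.apply_linearCombination R (DistribSMul.toLinearMap R M g) f v.coeff).symm

theorem linearCombination_int_surjective {X A : Type*} [AddCommGroup A] {f : X → A}
    (hf : AddSubgroup.closure (Set.range f) = ⊤) :
    Function.Surjective (Finsupp.linearCombination ℤ f) := by
  rw [← LinearMap.range_eq_top, Finsupp.range_linearCombination, ← Submodule.toAddSubgroup_inj,
    Submodule.span_int_eq_addSubgroupClosure, hf, Submodule.top_toAddSubgroup]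

theorem finite_module_covered_by_free_general {G A : Type*} [Monoid G] [AddCommGroup A]
    [DistribMulAction G A] (S : SubMulAction G A) [Finite S]
    (hS : AddSubgroup.closure (S : Set A) = ⊤) :
    ∃ (A' : Type) (_ : AddCommGroup A') (_ : DistribMulAction G A'),
      (∃ n : ℕ, Nonempty (A' ≃+ (Fin n → ℤ))) ∧
      ∃ φ : A' →+ A, Function.Surjective φ ∧ ∀ (g : G) (a : A'), φ (g • a) = g • φ a := by
  obtain ⟨n, ⟨e⟩⟩ := Finite.exists_equiv_fin S
  -- `S` lives in the universe of `A`, so its action is transported to `Fin n : Type`.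
  let _ : MulAction G (Fin n) := e.symm.mulAction G
  let f : Fin n →[G] A :=
    { toFun := fun i => e.symm i
      map_smul' := fun g i => by simp [Equiv.smul_def] }
  have range_f : Set.range f = S :=
    (e.symm.surjective.range_comp Subtype.val).trans Subtype.range_coe
  let coeffs : MonoidAlgebra ℤ (Fin n) ≃ₗ[ℤ] Fin n →₀ ℤ := MonoidAlgebra.coeffLinearEquiv ℤ
  exact ⟨MonoidAlgebra ℤ (Fin n), inferInstance,
    DistribMulAction.compHom _ (Representation.ofMulAction ℤ G (Fin n)),
    ⟨n, ⟨(coeffs.trans (Finsupp.linearEquivFunOnFinite ℤ ℤ (Fin n))).toAddEquiv⟩⟩,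
    (Finsupp.linearCombination ℤ f ∘ₗ coeffs.toLinearMap).toAddMonoidHom,
    (linearCombination_int_surjective (range_f ▸ hS)).comp coeffs.surjective,
    linearCombination_coeff_ofMulAction f⟩

/-- **Lemma 3.18.** Let `G` be a group and `A` a finite `ℤG`-module.  Then there are a
`ℤG`-module `A*` whose underlying abelian group is free abelian of finite rank and a
surjective `ℤG`-module homomorphism `φ : A* → A`. -/
theorem finite_module_covered_by_free (G : Type*) [Group G]
    (A : Type*) [AddCommGroup A] [DistribMulAction G A] [Finite A] :
    ∃ (A' : Type) (_ : AddCommGroup A') (_ : DistribMulAction G A'),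
      (∃ n : ℕ, Nonempty (A' ≃+ (Fin n → ℤ))) ∧
      ∃ φ : A' →+ A, Function.Surjective φ ∧ ∀ (g : G) (a : A'), φ (g • a) = g • φ a := by
  exact finite_module_covered_by_free_general (⊤ : SubMulAction G A) AddSubgroup.closure_univ
end

section
/- Let π be a set of primes and G a group. If G acts π-integrally on ℤG-modules A and B, then G acts π-integrally on the tensor product A ⊗_ℤ B, regarded as a ℤG-module via the diagonal action g·(a ⊗ b) = (g·a) ⊗ (g·b). -/
open scoped TensorProduct

/-- A nonzero integer is a `π`-number if all its prime divisors lie in `π`. -/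
def IsPiNumber (π : Set ℕ) (n : ℤ) : Prop :=
  n ≠ 0 ∧ ∀ p : ℕ, p.Prime → (p : ℤ) ∣ n → p ∈ π

/-- `G` acts `π`-integrally on the `ℤG`-module `A`. -/
def ActsPiIntegrally (π : Set ℕ) (G A : Type*) [Group G] [AddCommGroup A]
    [DistribMulAction G A] : Prop :=
  ∀ g : G, ∃ (m : ℕ) (α : Fin (m + 1) → ℤ), IsPiNumber π (α (Fin.last m)) ∧
    ∀ a : A, ∑ i : Fin (m + 1), α i • (g ^ (i : ℕ)) • a = 0

/-- The action of `g ∈ G` on `A ⊗_ℤ B` induced diagonally: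
`g • (a ⊗ b) = (g • a) ⊗ (g • b)`. -/
noncomputable def diagTensorAction {G : Type*} (A B : Type*) [Group G]
    [AddCommGroup A] [AddCommGroup B] [DistribMulAction G A] [DistribMulAction G B]
    (g : G) : A ⊗[ℤ] B →ₗ[ℤ] A ⊗[ℤ] B :=
  TensorProduct.map ((DistribMulAction.toAddMonoidHom A g).toIntLinearMap)
    ((DistribMulAction.toAddMonoidHom B g).toIntLinearMap)

/-!
If `∑ αᵢ xⁱ = 0` then `α_m x` is integral over `ℤ`, and conversely a monic equation for `s x` is an
equation for `x` with leading coefficient a power of `s`. So `G` acts `π`-integrally if and only if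
every group element becomes an integral endomorphism after multiplication by a `π`-number.
On `A ⊗ B` the diagonal action of `g` is the product of the commuting operators `g ⊗ 1` and `1 ⊗ g`,
and products of commuting integral elements are integral.
-/

section IsIntegralUpTo

open Polynomial

variable {R E F : Type*} [CommRing R] [Ring E] [Algebra R E] [Ring F] [Algebra R F]

open scoped IsMulCommutative in
theorem isIntegral_mul_of_commute {x y : E} (hx : IsIntegral R x) (hy : IsIntegral R y)
    (hxy : Commute x y) : IsIntegral R (x * y) := by
  let T : Subalgebra R E := Algebra.adjoin R {x, y}
  have : IsMulCommutative T :=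
    Algebra.isMulCommutative_adjoin R (by rintro a (rfl | rfl) b (rfl | rfl) <;> simp [hxy.eq])
  have isIntegral_val_iff {z : T} : IsIntegral R (z : E) ↔ IsIntegral R z :=
    isIntegral_algHom_iff T.val Subtype.val_injective
  let x' : T := ⟨x, Algebra.subset_adjoin (by simp)⟩
  let y' : T := ⟨y, Algebra.subset_adjoin (by simp)⟩
  have hx' : IsIntegral R x' := isIntegral_val_iff.mp hx
  have hy' : IsIntegral R y' := isIntegral_val_iff.mp hy
  exact isIntegral_val_iff.mpr (hx'.mul hy')

open scoped IsMulCommutative in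
theorem isIntegral_leadingCoeff_smul_of_aeval_eq_zero {p : R[X]} {x : E} (hx : aeval x p = 0) :
    IsIntegral R (p.leadingCoeff • x) := by
  let x' : Algebra.adjoin R {x} := ⟨x, Algebra.self_mem_adjoin_singleton R x⟩
  have hx' : aeval x' p = 0 := Subtype.ext (by simpa [x', aeval_subalgebra_coe] using hx)
  exact (isIntegral_leadingCoeff_smul p x' hx').map (Algebra.adjoin R {x}).val

theorem isIntegral_smul_of_sum_smul_pow_eq_zero {x : E} {m : ℕ} {α : Fin (m + 1) → R}
    (hα : ∑ i, α i • x ^ (i : ℕ) = 0) : IsIntegral R (α (Fin.last m) • x) := by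
  classical
  by_cases hm : α (Fin.last m) = 0
  · simp [hm, isIntegral_zero]
  have coeff_last : (ofFn (m + 1) α).coeff m = α (Fin.last m) :=
    ofFn_coeff_eq_val_of_lt α m.lt_succ_self
  have natDegree_eq : (ofFn (m + 1) α).natDegree = m :=
    natDegree_eq_of_le_of_coeff_ne_zero
      (Nat.lt_succ_iff.mp (ofFn_natDegree_lt m.succ_pos α)) (coeff_last ▸ hm)
  have aeval_eq_zero : aeval x (ofFn (m + 1) α) = 0 := by
    simpa [ofFn_eq_sum_monomial, aeval_monomial, Algebra.smul_def] using hα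
  simpa [leadingCoeff, natDegree_eq, coeff_last] using
    isIntegral_leadingCoeff_smul_of_aeval_eq_zero aeval_eq_zero

theorem exists_sum_smul_pow_eq_zero_of_isIntegral_smul {s : R} {x : E}
    (hx : IsIntegral R (s • x)) :
    ∃ (m : ℕ) (α : Fin (m + 1) → R), α (Fin.last m) = s ^ m ∧ ∑ i, α i • x ^ (i : ℕ) = 0 := by
  obtain ⟨p, hp, hpx⟩ := hx
  refine ⟨p.natDegree, fun i ↦ p.coeff i * s ^ (i : ℕ), by simp [hp.coeff_natDegree], ?_⟩
  rw [← aeval_def, aeval_eq_sum_range, Finset.sum_range] at hpx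
  simpa only [_root_.smul_pow, mul_smul] using hpx

/-- `x` is integral over `R` up to multiplication by an element of `S`. This is `π`-integrality of
an operator when `R = ℤ` and `S` is the monoid of `π`-numbers; it is phrased through `IsIntegral`
rather than through polynomials with leading coefficient in `S` (an equivalent condition by
`isIntegralUpTo_iff_exists_sum_smul_pow_eq_zero`) so that closure properties of integral elements
apply directly. -/
def IsIntegralUpTo (S : Submonoid R) (x : E) : Prop :=
  ∃ s ∈ S, IsIntegral R (s • x)

theorem isIntegralUpTo_iff_exists_sum_smul_pow_eq_zero {S : Submonoid R} {x : E} :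
    IsIntegralUpTo S x ↔ ∃ (m : ℕ) (α : Fin (m + 1) → R),
      α (Fin.last m) ∈ S ∧ ∑ i, α i • x ^ (i : ℕ) = 0 := by
  constructor
  · rintro ⟨s, hs, hx⟩
    obtain ⟨m, α, hα, hsum⟩ := exists_sum_smul_pow_eq_zero_of_isIntegral_smul hx
    exact ⟨m, α, hα ▸ pow_mem hs m, hsum⟩
  · rintro ⟨m, α, hα, hsum⟩
    exact ⟨_, hα, isIntegral_smul_of_sum_smul_pow_eq_zero hsum⟩

namespace IsIntegralUpTo

variable {S : Submonoid R}

theorem map {x : E} (hx : IsIntegralUpTo S x) (f : E →ₐ[R] F) : IsIntegralUpTo S (f x) := by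
  obtain ⟨s, hs, hsx⟩ := hx
  exact ⟨s, hs, map_smul f s x ▸ hsx.map f⟩

theorem mul_of_commute {x y : E} (hx : IsIntegralUpTo S x) (hy : IsIntegralUpTo S y)
    (hxy : Commute x y) : IsIntegralUpTo S (x * y) := by
  obtain ⟨s, hs, hsx⟩ := hx
  obtain ⟨t, ht, hty⟩ := hy
  refine ⟨s * t, mul_mem hs ht, ?_⟩
  rw [← smul_mul_smul_comm]
  exact isIntegral_mul_of_commute hsx hty ((hxy.smul_left s).smul_right t)

theorem tensorProductMap {M N : Type*} [AddCommGroup M] [Module R M] [AddCommGroup N] [Module R N]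
    {f : Module.End R M} {g : Module.End R N} (hf : IsIntegralUpTo S f)
    (hg : IsIntegralUpTo S g) :
    IsIntegralUpTo S (TensorProduct.map f g : Module.End R (M ⊗[R] N)) := by
  have hcomm : Commute (f.rTensor N) (g.lTensor M) :=
    (LinearMap.rTensor_comp_lTensor _ f g).trans (LinearMap.lTensor_comp_rTensor _ f g).symm
  rw [← LinearMap.rTensor_comp_lTensor]
  exact (hf.map (Module.End.rTensorAlgHom R M N)).mul_of_commute
    (hg.map (Module.End.lTensorAlgHom R N M)) hcomm

end IsIntegralUpTo

theorem isIntegralUpTo_apply_iff_exists_sum_smul_apply_eq_zero {S : Submonoid R} {G M : Type*}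
    [Monoid G] [AddCommGroup M] [Module R M] {ρ : Representation R G M} {g : G} :
    IsIntegralUpTo S (ρ g) ↔ ∃ (m : ℕ) (α : Fin (m + 1) → R),
      α (Fin.last m) ∈ S ∧ ∀ v : M, ∑ i, α i • ρ (g ^ (i : ℕ)) v = 0 := by
  simp only [isIntegralUpTo_iff_exists_sum_smul_pow_eq_zero, LinearMap.ext_iff,
    LinearMap.sum_apply, LinearMap.smul_apply, LinearMap.zero_apply, map_pow]

end IsIntegralUpTo

/-- The `π`-numbers as a multiplicative submonoid of `ℤ`, serving as the allowed leading
coefficients in `IsIntegralUpTo`. -/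
def piNumbers (π : Set ℕ) : Submonoid ℤ where
  carrier := {n | IsPiNumber π n}
  one_mem' := ⟨one_ne_zero, fun _ hp h ↦
    absurd (isUnit_of_dvd_one h) (Nat.prime_iff_prime_int.mp hp).not_isUnit⟩
  mul_mem' {_ _} ha hb := ⟨mul_ne_zero ha.1 hb.1, fun p hp h ↦
    ((Nat.prime_iff_prime_int.mp hp).dvd_or_dvd h).elim (ha.2 p hp) (hb.2 p hp)⟩

theorem mem_piNumbers {π : Set ℕ} {n : ℤ} : n ∈ piNumbers π ↔ IsPiNumber π n :=
  Iff.rfl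

theorem actsPiIntegrally_iff_isIntegralUpTo {π : Set ℕ} {G A : Type*} [Group G] [AddCommGroup A]
    [DistribMulAction G A] :
    ActsPiIntegrally π G A ↔
      ∀ g : G, IsIntegralUpTo (piNumbers π) (Representation.ofDistribMulAction ℤ G A g) := by
  simp only [isIntegralUpTo_apply_iff_exists_sum_smul_apply_eq_zero, mem_piNumbers,
    Representation.ofDistribMulAction_apply_apply, ActsPiIntegrally]

theorem diagTensorAction_eq_tprod {G A B : Type*} [Group G] [AddCommGroup A] [AddCommGroup B]
    [DistribMulAction G A] [DistribMulAction G B] (g : G) :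
    diagTensorAction A B g = (Representation.ofDistribMulAction ℤ G A).tprod
      (Representation.ofDistribMulAction ℤ G B) g :=
  rfl

/-- **Lemma 3.21.** If `G` acts `π`-integrally on the `ℤG`-modules `A` and `B`, then `G` acts
`π`-integrally on `A ⊗_ℤ B` with the diagonal action. -/
theorem actsPiIntegrally_tensor (π : Set ℕ) (hπ : ∀ p ∈ π, p.Prime)
    (G A B : Type*) [Group G] [AddCommGroup A] [AddCommGroup B]
    [DistribMulAction G A] [DistribMulAction G B]
    (hA : ActsPiIntegrally π G A) (hB : ActsPiIntegrally π G B) :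
    ∀ g : G, ∃ (m : ℕ) (α : Fin (m + 1) → ℤ), IsPiNumber π (α (Fin.last m)) ∧
      ∀ t : A ⊗[ℤ] B,
        ∑ i : Fin (m + 1), α i • (diagTensorAction A B (g ^ (i : ℕ))) t = 0 := by
  intro g
  let ρ := (Representation.ofDistribMulAction ℤ G A).tprod (Representation.ofDistribMulAction ℤ G B)
  have hρ : IsIntegralUpTo (piNumbers π) (ρ g) :=
    (actsPiIntegrally_iff_isIntegralUpTo.mp hA g).tensorProductMap
      (actsPiIntegrally_iff_isIntegralUpTo.mp hB g)
  obtain ⟨m, α, hα, hsum⟩ := isIntegralUpTo_apply_iff_exists_sum_smul_apply_eq_zero.mp hρ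
  refine ⟨m, α, mem_piNumbers.mp hα, fun t ↦ ?_⟩
  simp only [diagTensorAction_eq_tprod]
  -- `hsum` uses the tensor product's `ℤ`-action, the goal that of the additive group;
  -- the two agree definitionally.
  exact hsum t
end

section
/- (Hilton) Let 1 → K → G → Q → 1 be a group extension (K a normal subgroup of G with quotient Q) and φ : K → L a group homomorphism. Suppose G acts on L by automorphisms so that: (i) k·l = φ(k) l φ(k)⁻¹ for all l ∈ L and k ∈ K; (ii) g·φ(k) = φ(g k g⁻¹) for all g ∈ G and k ∈ K. Let K† = { (φ(k), k⁻¹) : k ∈ K } ⊆ L ⋊ G. Then K† is a normal subgroup of the semidirect product L ⋊ G. Moreover, setting G* = (L ⋊ G)/K†, the map ψ : G → G* given by g ↦ (1, g)K† is a homomorphism satisfying ψ(k) = (φ(k), 1)K† for every k ∈ K, the map ι : L → G* given by l ↦ (l, 1)K† is an injective homomorphism whose image is normal in G*, and the composite G → G* → G*/ι(L) induces an isomorphism Q ≅ G*/ι(L). -/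
/-!
By (i), `(φ(k)⁻¹, k)` depends multiplicatively on `k` and commutes with every element of `L`; by
(ii), conjugation by `g ∈ G` sends it to the same pair for `g k g⁻¹`. So these pairs form a normal
subgroup, which is `K†`. Its intersection with `L` is trivial because `k = 1` forces `φ(k) = 1`,
and its projection to `G` is `K`; the former gives the injectivity of `ι`, and the latter shows
that killing both `K†` and `L` in `L ⋊ G` leaves `G / K`.
-/

namespace RelativeExtension

open SemidirectProduct

variable {G L : Type*} [Group G] [Group L] {a : G →* MulAut L}

section QuotientByNormal

variable (D : Subgroup (L ⋊[a] G)) [D.Normal]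

instance normal_range_mk'_comp_inl :
    ((QuotientGroup.mk' D).comp (inl : L →* L ⋊[a] G)).range.Normal := by
  rw [MonoidHom.range_comp, range_inl_eq_ker_rightHom]
  exact rightHom.normal_ker.map _ (QuotientGroup.mk'_surjective D)

/-- For a normal subgroup `D` of `L ⋊ G`, the composite `G → (L ⋊ G)/D → ((L ⋊ G)/D)/ι(L)`, where
`ι(L)` is the image of `L`. It induces the isomorphism of quotients in Hilton's theorem. -/
def quotientInr :
    G →* ((L ⋊[a] G) ⧸ D) ⧸ ((QuotientGroup.mk' D).comp (inl : L →* L ⋊[a] G)).range :=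
  (QuotientGroup.mk' _).comp ((QuotientGroup.mk' D).comp inr)

theorem quotientInr_right (x : L ⋊[a] G) :
    quotientInr D x.right = QuotientGroup.mk (QuotientGroup.mk' D x) := by
  have inl_eq : inl x.left⁻¹ = inr x.right / x := by
    rw [eq_div_iff_mul_eq', map_inv, inv_mul_eq_iff_eq_mul, inl_left_mul_inr_right]
  exact QuotientGroup.eq_iff_div_mem.2 ⟨x.left⁻¹, congrArg (QuotientGroup.mk' D) inl_eq⟩

theorem quotientInr_surjective : Function.Surjective (quotientInr D) := by
  intro y
  obtain ⟨z, rfl⟩ := QuotientGroup.mk_surjective y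
  obtain ⟨x, rfl⟩ := QuotientGroup.mk'_surjective D z
  exact ⟨x.right, quotientInr_right D x⟩

theorem ker_quotientInr : (quotientInr D).ker = D.map rightHom := by
  ext g
  constructor
  · intro hg
    obtain ⟨l, hl⟩ := (QuotientGroup.eq_one_iff _).1 hg
    exact ⟨(inl l)⁻¹ * inr g, QuotientGroup.eq.1 hl, by simp⟩
  · rintro ⟨x, hx, rfl⟩
    have hx_one : QuotientGroup.mk' D x = 1 := (QuotientGroup.eq_one_iff x).2 hx
    rw [MonoidHom.mem_ker, rightHom_eq_right, quotientInr_right, hx_one, QuotientGroup.mk_one]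

end QuotientByNormal

section Antidiagonal

variable {N : Type*} [Group N] {f : N →* G} {φ : N →* L}
  (hφ : ∀ n l, a (f n) l = φ n * l * (φ n)⁻¹)

/-- The homomorphism `n ↦ (φ(n)⁻¹, f(n))` into `L ⋊ G`, for `n` acting on `L` through `f` as
conjugation by `φ(n)`. When `f` is the inclusion of `K`, its range is the subgroup `K†`; compared
with the parametrization `(φ(k), k⁻¹)` of `K†`, which reverses products, `k` is replaced by its
inverse. -/
def antidiagonal : N →* L ⋊[a] G :=
  MonoidHom.mk' (fun n ↦ ⟨(φ n)⁻¹, f n⟩) fun m n ↦ by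
    ext
    · simp [hφ, mul_assoc]
    · simp

theorem antidiagonal_eq_inl_mul_inr (n : N) :
    antidiagonal hφ n = inl (φ n)⁻¹ * inr (f n) :=
  mk_eq_inl_mul_inr _ _

theorem coe_range_antidiagonal :
    ((antidiagonal hφ).range : Set (L ⋊[a] G)) = {x | ∃ n, x = ⟨φ n, (f n)⁻¹⟩} := by
  ext x
  have hinv (n : N) : antidiagonal hφ n⁻¹ = ⟨φ n, (f n)⁻¹⟩ := by
    simp [antidiagonal]
  rw [MonoidHom.coe_range, ← (Equiv.inv N).surjective.range_comp]
  simp [hinv, eq_comm]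

theorem map_rightHom_range_antidiagonal : (antidiagonal hφ).range.map rightHom = f.range :=
  (MonoidHom.map_range _ _).trans rfl

theorem commute_inl_antidiagonal (l : L) (n : N) : Commute (inl l) (antidiagonal hφ n) := by
  ext
  · simp [antidiagonal, hφ, mul_assoc]
  · simp [antidiagonal]

theorem inr_conj_antidiagonal {g : G} {m n : N} (hf : f m = g * f n * g⁻¹)
    (hφg : φ m = a g (φ n)) :
    inr g * antidiagonal hφ n * (inr g)⁻¹ = antidiagonal hφ m := by
  ext
  · simp [antidiagonal, hφg]
  · simp [antidiagonal, hf]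

theorem normal_range_antidiagonal
    (hconj : ∀ g n, ∃ m, f m = g * f n * g⁻¹ ∧ φ m = a g (φ n)) :
    (antidiagonal hφ).range.Normal := by
  refine ⟨?_⟩
  rintro _ ⟨n, rfl⟩ x
  obtain ⟨m, hf, hφg⟩ := hconj x.right n
  refine ⟨m, ?_⟩
  calc
    antidiagonal hφ m = inl x.left * antidiagonal hφ m * (inl x.left)⁻¹ :=
      (commute_inl_antidiagonal hφ x.left m).mul_inv_cancel.symm
    _ = (inl x.left * inr x.right) * antidiagonal hφ n * (inl x.left * inr x.right)⁻¹ := by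
      rw [← inr_conj_antidiagonal hφ hf hφg]
      group
    _ = x * antidiagonal hφ n * x⁻¹ := by
      rw [inl_left_mul_inr_right]

theorem mk'_inr_eq_mk'_inl [(antidiagonal hφ).range.Normal] (n : N) :
    QuotientGroup.mk' (antidiagonal hφ).range (inr (f n)) =
      QuotientGroup.mk' (antidiagonal hφ).range (inl (φ n)) := by
  have mem : (inl (φ n))⁻¹ * inr (f n) ∈ (antidiagonal hφ).range :=
    ⟨n, by rw [antidiagonal_eq_inl_mul_inr, map_inv]⟩
  exact (QuotientGroup.eq.2 mem).symm

theorem ker_mk'_comp_inl [(antidiagonal hφ).range.Normal] :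
    ((QuotientGroup.mk' (antidiagonal hφ).range).comp inl).ker = f.ker.map φ := by
  ext l
  rw [← MonoidHom.comap_ker, QuotientGroup.ker_mk', Subgroup.mem_comap, ← SetLike.mem_coe,
    coe_range_antidiagonal]
  simp [SemidirectProduct.ext_iff, and_comm, eq_comm]

theorem mk'_comp_inl_injective [(antidiagonal hφ).range.Normal] (hf : Function.Injective f) :
    Function.Injective ((QuotientGroup.mk' (antidiagonal hφ).range).comp inl) := by
  rw [← MonoidHom.ker_eq_bot_iff, ker_mk'_comp_inl, f.ker_eq_bot_iff.2 hf, Subgroup.map_bot]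

end Antidiagonal

end RelativeExtension

/-- **Proposition 5.9 (Hilton).** Let `1 → K → G → Q → 1` be a group extension, `φ : K → L`
a homomorphism, and let `G` act on `L` (via `a : G →* MulAut L`) so that
(i) `k · l = φ(k) l φ(k)⁻¹` for `k ∈ K`, `l ∈ L`, and (ii) `g · φ(k) = φ(g k g⁻¹)`.
Then `K† = {(φ(k), k⁻¹) : k ∈ K}` is a normal subgroup of `L ⋊ G`; moreover, setting
`G* = (L ⋊ G)/K†`, the map `ψ : g ↦ (1,g)K†` is a homomorphism with `ψ(k) = (φ(k),1)K†`
for `k ∈ K`, the map `ι : l ↦ (l,1)K†` is injective with normal image, and `ψ` induces an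
isomorphism `Q = G/K ≅ G*/ι(L)`. -/
theorem hilton_relative_extension (G L : Type*) [Group G] [Group L]
    (K : Subgroup G) (hK : K.Normal) (φ : ↥K →* L) (a : G →* MulAut L)
    (h1 : ∀ (k : ↥K) (l : L), a ↑k l = φ k * l * (φ k)⁻¹)
    (h2 : ∀ (g : G) (k : ↥K), a g (φ k) = φ ⟨g * ↑k * g⁻¹, hK.conj_mem ↑k k.2 g⟩) :
    ∃ Kd : Subgroup (L ⋊[a] G),
      (Kd : Set (L ⋊[a] G)) = {x | ∃ k : ↥K, x = ⟨φ k, (↑k)⁻¹⟩} ∧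
      ∃ _ : Kd.Normal,
        (∀ k : ↥K,
          (QuotientGroup.mk' Kd) ⟨1, ↑k⟩ = (QuotientGroup.mk' Kd) ⟨φ k, 1⟩) ∧
        Function.Injective ((QuotientGroup.mk' Kd).comp SemidirectProduct.inl) ∧
        ∃ _ : (((QuotientGroup.mk' Kd).comp SemidirectProduct.inl).range).Normal,
          ∃ e : (G ⧸ K) ≃*
              (((L ⋊[a] G) ⧸ Kd) ⧸ ((QuotientGroup.mk' Kd).comp SemidirectProduct.inl).range),
            ∀ g : G,
              e (QuotientGroup.mk g) =
                QuotientGroup.mk ((QuotientGroup.mk' Kd) (SemidirectProduct.inr g)) := by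
  have hφ : ∀ k l, a (K.subtype k) l = φ k * l * (φ k)⁻¹ := h1
  have normal_Kd : (RelativeExtension.antidiagonal hφ).range.Normal :=
    RelativeExtension.normal_range_antidiagonal hφ fun g k ↦
      ⟨⟨g * k * g⁻¹, hK.conj_mem k k.2 g⟩, rfl, (h2 g k).symm⟩
  have ker_eq :
      (RelativeExtension.quotientInr (RelativeExtension.antidiagonal hφ).range).ker = K := by
    rw [RelativeExtension.ker_quotientInr, RelativeExtension.map_rightHom_range_antidiagonal,
      K.range_subtype]
  exact ⟨(RelativeExtension.antidiagonal hφ).range,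
    RelativeExtension.coe_range_antidiagonal hφ,
    normal_Kd,
    RelativeExtension.mk'_inr_eq_mk'_inl hφ,
    RelativeExtension.mk'_comp_inl_injective hφ K.subtype_injective,
    RelativeExtension.normal_range_mk'_comp_inl _,
    (QuotientGroup.quotientMulEquivOfEq ker_eq.symm).trans
      (QuotientGroup.quotientKerEquivOfSurjective _ (RelativeExtension.quotientInr_surjective _)),
    fun _ ↦ rfl⟩
end
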